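/- Smart-style DLP reduction over dual numbers: let P, Q ∈ E(𝔽_p)[p] with Q = nP, and let P̃, Q̃ ∈ Ẽ(𝔽_p[ε]) be any lifts of P, Q to a (possibly non-canonical) lift Ẽ of E. Then p·P̃ and p·Q̃ lie in Θ, and p·(nP̃) - p·Q̃ = O (the identity). Consequently, writing p·P̃ = O_a and p·Q̃ = O_b with a, b ∈ 𝔽_p, one has n·a = b in 𝔽_p; if a ≠ 0 then n ≡ b·a^{-1} mod p. -/

import Mathlib

noncomputable section
open scoped Classical

/-- The inclusion `K → K[ε]` of the base ring into the dual numbers. -/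
abbrev ιD {K : Type*} [CommRing K] (a : K) : DualNumber K := TrivSqZeroExt.inl a

/-- The element `ε` of the dual numbers `K[ε]`. -/
abbrev εD (K : Type*) [CommRing K] : DualNumber K := DualNumber.eps

/-- A projective coordinate triple `(X, Y, Z)`. -/
abbrev Pt (R : Type*) := R × R × R

/-- The projective Weierstrass equation `Y²Z = X³ + A·XZ² + B·Z³` for the curve
`y² = x³ + Ax + B`. -/
def OnCurve {R : Type*} [CommRing R] (A B : R) (P : Pt R) : Prop :=
  P.2.1 ^ 2 * P.2.2 = P.1 ^ 3 + A * P.1 * P.2.2 ^ 2 + B * P.2.2 ^ 3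

/-- The standard projective addition law on the Weierstrass curve
`y² = x³ + Ax + B`, written via the complete addition formulas
(valid over any commutative ring, agreeing with the usual chord–tangent law). -/
def padd {R : Type*} [CommRing R] (A B : R) (P Q : Pt R) : Pt R :=
  let X1 := P.1; let Y1 := P.2.1; let Z1 := P.2.2
  let X2 := Q.1; let Y2 := Q.2.1; let Z2 := Q.2.2
  let b3 := 3 * B
  ((X1 * Y2 + X2 * Y1) * (Y1 * Y2 - A * (X1 * Z2 + X2 * Z1) - b3 * Z1 * Z2)
      - (Y1 * Z2 + Y2 * Z1) * (A * X1 * X2 + b3 * (X1 * Z2 + X2 * Z1) - A ^ 2 * Z1 * Z2),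
    (3 * X1 * X2 + A * Z1 * Z2) * (A * X1 * X2 + b3 * (X1 * Z2 + X2 * Z1) - A ^ 2 * Z1 * Z2)
      + (Y1 * Y2 + A * (X1 * Z2 + X2 * Z1) + b3 * Z1 * Z2)
        * (Y1 * Y2 - A * (X1 * Z2 + X2 * Z1) - b3 * Z1 * Z2),
    (Y1 * Z2 + Y2 * Z1) * (Y1 * Y2 + A * (X1 * Z2 + X2 * Z1) + b3 * Z1 * Z2)
      + (X1 * Y2 + X2 * Y1) * (3 * X1 * X2 + A * Z1 * Z2))

/-- The `n`-fold sum `n • P` on the curve, starting from the identity `(0 : 1 : 0)`. -/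
def pmul {R : Type*} [CommRing R] (A B : R) (n : ℕ) (P : Pt R) : Pt R :=
  (fun Q => padd A B Q P)^[n] (0, 1, 0)

/-- Equality of projective points: the coordinates agree up to a unit scalar. -/
def ProjEq {R : Type*} [CommRing R] (P Q : Pt R) : Prop :=
  ∃ u : Rˣ, Q = ((u : R) * P.1, (u : R) * P.2.1, (u : R) * P.2.2)

/-- The point at infinity `O_k = (kε : 1 : 0)` of the lift of the curve to `K[ε]`. -/
def Oinf {K : Type*} [CommRing K] (k : K) : Pt (DualNumber K) :=
  (ιD k * εD K, 1, 0)

/-!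
The ring homomorphism `K⟦X⟧ → K[ε]`, `X ↦ ε`, transports identities between points from a
Weierstrass curve over the field `Frac K⟦X⟧`, where the group law is available, to `Ẽ(K[ε])`: the
coefficients of `Ẽ` lift to `K⟦X⟧`, and so do its points, by Hensel's lemma applied to
`y² = x³ + Ax + B`. Since the addition formulas can return `(0, 0, 0)`, an identity transfers only
where the coordinate triples are nonzero, which is read off from their reductions modulo `ε`.

Two lifts `nP̃` and `Q̃` of the same point differ by some `D` in `Θ`, and `O_k + O_l = O_{k+l}`
gives `p·D = O_{pk} = O`; hence `p(nP̃) = pQ̃`. On the other hand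
`p(nP̃) = n(pP̃) = n·O_a = O_{na}`.
-/

section CommRing

variable {R S : Type*} [CommRing R] [CommRing S]

lemma onCurve_affine_iff {A B x y : R} :
    OnCurve A B (x, y, 1) ↔ y ^ 2 = x ^ 3 + A * x + B := by
  simp [OnCurve]

lemma padd_smul (A B c d : R) (P Q : Pt R) :
    padd A B (c • P) (d • Q) = (c ^ 2 * d ^ 2) • padd A B P Q := by
  refine Prod.ext ?_ (Prod.ext ?_ ?_) <;>
    simp only [padd, Prod.smul_fst, Prod.smul_snd, smul_eq_mul] <;> ring

lemma padd_comm (A B : R) (P Q : Pt R) : padd A B P Q = padd A B Q P := by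
  refine Prod.ext ?_ (Prod.ext ?_ ?_) <;> simp only [padd] <;> ring

lemma padd_zero_left (A B : R) (Q : Pt R) : padd A B 0 Q = 0 := by
  simpa using padd_smul A B 0 1 0 Q

lemma padd_infinity_left (A B : R) (Q : Pt R) : padd A B (0, 1, 0) Q = Q.2.1 • Q := by
  refine Prod.ext ?_ (Prod.ext ?_ ?_) <;>
    simp only [padd, Prod.smul_fst, Prod.smul_snd, smul_eq_mul] <;> ring

lemma ne_zero_of_isUnit_Y [Nontrivial R] {P : Pt R} (h : IsUnit P.2.1) : P ≠ 0 := by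
  rintro rfl
  exact not_isUnit_zero h

/-- The inverse `(X : -Y : Z)` of a point of a short Weierstrass curve. -/
def Pt.neg (P : Pt R) : Pt R := (P.1, -P.2.1, P.2.2)

lemma Pt.neg_smul (c : R) (P : Pt R) : (c • P).neg = c • P.neg := by
  simp [Pt.neg]

lemma padd_neg_self (A B : R) (P : Pt R) :
    padd A B P P.neg = (padd A B P P).2.1 • ((0, 1, 0) : Pt R) := by
  refine Prod.ext ?_ (Prod.ext ?_ ?_) <;>
    simp only [padd, Pt.neg, Prod.smul_fst, Prod.smul_snd, smul_eq_mul] <;> ring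

/- If the line `y = ℓx + μ` meets the curve at abscissae `x`, `u`, `w`, then the coefficients of the
curve are the elementary symmetric functions below; this covers chords and tangents alike. -/
lemma padd_of_line (ℓ μ x u w : R) (hw : w = ℓ ^ 2 - x - u) :
    padd (2 * ℓ * μ + x * u + x * w + u * w) (μ ^ 2 - x * u * w)
        (x, ℓ * x + μ, 1) (u, ℓ * u + μ, 1) =
      (padd (2 * ℓ * μ + x * u + x * w + u * w) (μ ^ 2 - x * u * w)
        (x, ℓ * x + μ, 1) (u, ℓ * u + μ, 1)).2.2 • (w, -(ℓ * w + μ), 1) := by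
  subst hw
  refine Prod.ext ?_ (Prod.ext ?_ (mul_one _).symm) <;>
    simp only [padd, Prod.smul_fst, Prod.smul_snd, smul_eq_mul] <;> ring

lemma pmul_zero (A B : R) (P : Pt R) : pmul A B 0 P = (0, 1, 0) := rfl

lemma pmul_succ (A B : R) (n : ℕ) (P : Pt R) :
    pmul A B (n + 1) P = padd A B (pmul A B n P) P :=
  Function.iterate_succ_apply' _ _ _

lemma pmul_ne_zero_of_le {A B : R} {P : Pt R} {m n : ℕ} (hmn : m ≤ n)
    (h : pmul A B n P ≠ 0) : pmul A B m P ≠ 0 := by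
  induction n, hmn using Nat.le_induction with
  | base => exact h
  | succ n _ ih =>
    refine ih fun h0 => h ?_
    rw [pmul_succ, h0, padd_zero_left]

lemma Y_ne_zero_of_pmul_ne_zero {A B x y : R} {m : ℕ} (hm : 0 < m)
    (h : pmul A B m (x, y, 1) ≠ 0) : y ≠ 0 := by
  rintro rfl
  refine pmul_ne_zero_of_le hm h ?_
  rw [pmul_succ, pmul_zero, padd_infinity_left, zero_smul]

lemma projEq_iff {P Q : Pt R} : ProjEq P Q ↔ ∃ u : Rˣ, Q = (u : R) • P := Iff.rfl

lemma projEq_smul {c : R} (hc : IsUnit c) (P : Pt R) : ProjEq P (c • P) :=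
  projEq_iff.2 ⟨hc.unit, rfl⟩

namespace ProjEq

protected lemma refl (P : Pt R) : ProjEq P P := by
  simpa using projEq_smul isUnit_one P

protected lemma symm {P Q : Pt R} (h : ProjEq P Q) : ProjEq Q P := by
  obtain ⟨u, rfl⟩ := projEq_iff.1 h
  exact projEq_iff.2 ⟨u⁻¹, by rw [smul_smul, Units.inv_mul, one_smul]⟩

protected lemma trans {P Q T : Pt R} (h : ProjEq P Q) (h' : ProjEq Q T) : ProjEq P T := by
  obtain ⟨u, rfl⟩ := projEq_iff.1 h
  obtain ⟨v, rfl⟩ := projEq_iff.1 h'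
  exact projEq_iff.2 ⟨v * u, by rw [smul_smul, Units.val_mul]⟩

lemma ne_zero {P Q : Pt R} (h : ProjEq P Q) (hQ : Q ≠ 0) : P ≠ 0 := by
  obtain ⟨u, rfl⟩ := projEq_iff.1 h
  exact right_ne_zero_of_smul hQ

lemma isUnit_Y {P Q : Pt R} (h : ProjEq P Q) (hQ : IsUnit Q.2.1) : IsUnit P.2.1 := by
  obtain ⟨u, rfl⟩ := h
  exact isUnit_of_mul_isUnit_right hQ

protected lemma neg {P Q : Pt R} (h : ProjEq P Q) : ProjEq P.neg Q.neg := by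
  obtain ⟨u, rfl⟩ := projEq_iff.1 h
  exact projEq_iff.2 ⟨u, Pt.neg_smul _ _⟩

protected lemma padd (A B : R) {P P' Q Q' : Pt R} (hP : ProjEq P P') (hQ : ProjEq Q Q') :
    ProjEq (padd A B P Q) (padd A B P' Q') := by
  obtain ⟨u, rfl⟩ := projEq_iff.1 hP
  obtain ⟨v, rfl⟩ := projEq_iff.1 hQ
  exact projEq_iff.2 ⟨u ^ 2 * v ^ 2, by simp [padd_smul]⟩

protected lemma pmul (A B : R) (n : ℕ) {P Q : Pt R} (h : ProjEq P Q) :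
    ProjEq (pmul A B n P) (pmul A B n Q) := by
  induction n with
  | zero => exact .refl _
  | succ n ih => simpa only [pmul_succ] using ih.padd A B h

lemma onCurve {A B : R} {P Q : Pt R} (h : ProjEq P Q) (hP : OnCurve A B P) : OnCurve A B Q := by
  obtain ⟨u, rfl⟩ := h
  simp only [OnCurve] at hP ⊢
  linear_combination (u : R) ^ 3 * hP

end ProjEq

/-- The image of a coordinate triple under a ring homomorphism. -/
def Pt.map (f : R →+* S) (P : Pt R) : Pt S := (f P.1, f P.2.1, f P.2.2)

namespace Pt

lemma map_injective {f : R →+* S} (hf : Function.Injective f) : Function.Injective (map f) :=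
  fun _ _ h => Prod.ext (hf congr(($h).1))
    (Prod.ext (hf congr(($h).2.1)) (hf congr(($h).2.2)))

lemma ne_zero_of_map {f : R →+* S} {P : Pt R} (h : map f P ≠ 0) : P ≠ 0 := by
  rintro rfl
  exact h (by simp [map])

lemma map_ne_zero {f : R →+* S} (hf : Function.Injective f) {P : Pt R} (h : P ≠ 0) :
    map f P ≠ 0 :=
  fun h0 => h (map_injective hf (by simpa [map] using h0))

lemma map_smul (f : R →+* S) (c : R) (P : Pt R) : map f (c • P) = f c • map f P := by
  simp [map]

lemma map_neg (f : R →+* S) (P : Pt R) : map f P.neg = (map f P).neg := by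
  simp [map, neg]

lemma map_padd (f : R →+* S) (A B : R) (P Q : Pt R) :
    map f (padd A B P Q) = padd (f A) (f B) (map f P) (map f Q) := by
  simp [map, padd, map_ofNat]

lemma map_pmul (f : R →+* S) (A B : R) (n : ℕ) (P : Pt R) :
    map f (pmul A B n P) = pmul (f A) (f B) n (map f P) := by
  induction n with
  | zero => simp [map, pmul_zero]
  | succ n ih => rw [pmul_succ, pmul_succ, map_padd, ih]

end Pt

protected lemma OnCurve.map (f : R →+* S) {A B : R} {P : Pt R} (h : OnCurve A B P) :
    OnCurve (f A) (f B) (P.map f) := by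
  simpa [OnCurve, Pt.map] using congrArg f h

lemma OnCurve.of_map {f : R →+* S} (hf : Function.Injective f) {A B : R} {P : Pt R}
    (h : OnCurve (f A) (f B) (P.map f)) : OnCurve A B P :=
  hf (by simpa [OnCurve, Pt.map] using h)

end CommRing

section Field

open WeierstrassCurve

variable {F : Type*} [Field F] {A B : F}

/-- The Weierstrass curve `y² = x³ + Ax + B`. -/
abbrev shortCurve (A B : F) : Affine F := ⟨0, 0, 0, A, B⟩

/-- Homogeneous coordinates of a point, normalised by `O = (0 : 1 : 0)` and `Z = 1` elsewhere. -/
def projCoords : (shortCurve A B).Point → Pt F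
  | .zero => (0, 1, 0)
  | .some x y _ => (x, y, 1)

lemma projCoords_zero : projCoords (0 : (shortCurve A B).Point) = (0, 1, 0) := rfl

lemma projCoords_some {x y : F} (h : (shortCurve A B).Nonsingular x y) :
    projCoords (.some x y h) = (x, y, 1) := rfl

lemma shortCurve_equation_iff {x y : F} :
    (shortCurve A B).Equation x y ↔ OnCurve A B (x, y, 1) := by
  simp [Affine.equation_iff, OnCurve]

lemma shortCurve_negY (x y : F) : (shortCurve A B).negY x y = -y := by
  simp [Affine.negY]

lemma shortCurve_nonsingular (h2 : (2 : F) ≠ 0) {x y : F} (h : OnCurve A B (x, y, 1))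
    (hy : y ≠ 0) : (shortCurve A B).Nonsingular x y :=
  (Affine.nonsingular_iff' ..).2 ⟨shortCurve_equation_iff.2 h, .inr (by simp [h2, hy])⟩

lemma onCurve_projCoords (P : (shortCurve A B).Point) : OnCurve A B (projCoords P) := by
  rcases P with _ | ⟨x, y, h⟩
  · simp [OnCurve, projCoords]
  · exact shortCurve_equation_iff.1 h.1

lemma projCoords_neg (P : (shortCurve A B).Point) :
    ProjEq (projCoords P).neg (projCoords (-P)) := by
  rcases P with _ | ⟨x, y, h⟩
  · exact projEq_iff.2 ⟨-1, by simp [projCoords, Pt.neg, ← Affine.Point.zero_def]⟩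
  · simpa [projCoords, Pt.neg, Affine.Point.neg_some, shortCurve_negY] using ProjEq.refl (x, -y, 1)

lemma eq_zero_of_projEq_infinity {P : (shortCurve A B).Point}
    (h : ProjEq (projCoords P) (0, 1, 0)) : P = 0 := by
  rcases P with _ | ⟨x, y, hP⟩
  · rfl
  · obtain ⟨u, hu⟩ := h
    exact absurd congr(($hu).2.2) (by simp [projCoords, u.ne_zero.symm])

lemma coeff_eq_of_slope {x y u v : F} (h : (shortCurve A B).Equation x y)
    (h' : (shortCurve A B).Equation u v) (hxy : ¬(x = u ∧ y = (shortCurve A B).negY u v))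
    {ℓ w : F} (hℓ : ℓ = (shortCurve A B).slope x u y v) (hw : w = ℓ ^ 2 - x - u) :
    A = 2 * ℓ * (y - ℓ * x) + x * u + x * w + u * w ∧ B = (y - ℓ * x) ^ 2 - x * u * w := by
  have hline := Affine.addPolynomial_slope h h' hxy
  have haddX : (shortCurve A B).addX x u ℓ = w := by simp [Affine.addX, hw]
  rw [← hℓ, haddX, Affine.addPolynomial_eq, neg_inj, Cubic.prod_X_sub_C_eq,
    Cubic.toPoly_injective, Cubic.mk.injEq] at hline
  obtain ⟨-, -, hA, hB⟩ := hline
  constructor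
  · linear_combination hA
  · linear_combination hB

lemma line_of_slope {x y u v : F} (h : (shortCurve A B).Equation x y)
    (h' : (shortCurve A B).Equation u v) (hxy : ¬(x = u ∧ y = (shortCurve A B).negY u v)) :
    v = (shortCurve A B).slope x u y v * u + (y - (shortCurve A B).slope x u y v * x) := by
  by_cases hx : x = u
  · subst hx
    rw [← Affine.Y_eq_of_Y_ne h h' rfl fun hy => hxy ⟨rfl, hy⟩]
    ring
  · rw [Affine.slope_of_X_ne hx]
    field_simp [sub_ne_zero.2 hx]
    ring

lemma padd_eq_smul_of_slope {x y u v : F} (h : (shortCurve A B).Nonsingular x y)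
    (h' : (shortCurve A B).Nonsingular u v)
    (hxy : ¬(x = u ∧ y = (shortCurve A B).negY u v)) :
    padd A B (x, y, 1) (u, v, 1) = (padd A B (x, y, 1) (u, v, 1)).2.2 •
      projCoords (.some x y h + .some u v h' : (shortCurve A B).Point) := by
  obtain ⟨hA, hB⟩ := coeff_eq_of_slope h.1 h'.1 hxy rfl rfl
  have hv := line_of_slope h.1 h'.1 hxy
  rw [Affine.Point.add_some hxy, projCoords_some]
  simp only [Affine.addX, Affine.addY, Affine.negAddY, Affine.negY]
  generalize (shortCurve A B).slope x u y v = ℓ at hA hB hv ⊢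
  have hline := padd_of_line ℓ (y - ℓ * x) x u _ rfl
  rw [← hA, ← hB, ← hv, show ℓ * x + (y - ℓ * x) = y by ring] at hline
  convert hline using 3 <;> ring_nf

lemma projEq_padd_some {x y u v : F} (h : (shortCurve A B).Nonsingular x y)
    (h' : (shortCurve A B).Nonsingular u v) (h0 : padd A B (x, y, 1) (u, v, 1) ≠ 0) :
    ProjEq (padd A B (x, y, 1) (u, v, 1))
      (projCoords (.some x y h + .some u v h' : (shortCurve A B).Point)) := by
  suffices ∃ c : F, padd A B (x, y, 1) (u, v, 1) =
      c • projCoords (.some x y h + .some u v h' : (shortCurve A B).Point) by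
    obtain ⟨c, hc⟩ := this
    rw [hc] at h0 ⊢
    exact (projEq_smul (left_ne_zero_of_smul h0).isUnit _).symm
  by_cases hxy : x = u ∧ y = (shortCurve A B).negY u v
  · have hneg : Pt.neg (x, y, 1) = (u, v, 1) := by simp [Pt.neg, hxy]
    rw [Affine.Point.add_of_Y_eq hxy.1 hxy.2, projCoords_zero, ← hneg, padd_neg_self]
    exact ⟨_, rfl⟩
  · exact ⟨_, padd_eq_smul_of_slope h h' hxy⟩

lemma projEq_padd_projCoords {P Q : (shortCurve A B).Point}
    (h0 : padd A B (projCoords P) (projCoords Q) ≠ 0) :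
    ProjEq (padd A B (projCoords P) (projCoords Q)) (projCoords (P + Q)) := by
  have infinity_left {Q : (shortCurve A B).Point} (h0 : padd A B (0, 1, 0) (projCoords Q) ≠ 0) :
      ProjEq (padd A B (0, 1, 0) (projCoords Q)) (projCoords Q) := by
    rw [padd_infinity_left] at h0 ⊢
    exact (projEq_smul (left_ne_zero_of_smul h0).isUnit _).symm
  rcases P with _ | ⟨x, y, hP⟩
  · rw [← Affine.Point.zero_def, projCoords_zero] at h0 ⊢
    rw [zero_add]
    exact infinity_left h0
  rcases Q with _ | ⟨u, v, hQ⟩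
  · rw [← Affine.Point.zero_def, projCoords_zero, padd_comm] at h0 ⊢
    rw [add_zero]
    exact infinity_left h0
  · exact projEq_padd_some hP hQ h0

lemma ProjEq.padd_projCoords {T T' : Pt F} {P P' : (shortCurve A B).Point}
    (h : ProjEq T (projCoords P)) (h' : ProjEq T' (projCoords P'))
    (h0 : padd A B T T' ≠ 0) :
    ProjEq (padd A B T T') (projCoords (P + P')) :=
  (h.padd A B h').trans (projEq_padd_projCoords ((h.padd A B h').symm.ne_zero h0))

lemma ProjEq.pmul_projCoords {T : Pt F} {P : (shortCurve A B).Point}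
    (h : ProjEq T (projCoords P)) {n : ℕ} (h0 : pmul A B n T ≠ 0) :
    ProjEq (pmul A B n T) (projCoords (n • P)) := by
  induction n with
  | zero => simpa [pmul_zero, projCoords_zero] using ProjEq.refl _
  | succ n ih =>
    have hn := ih (pmul_ne_zero_of_le n.le_succ h0)
    rw [pmul_succ] at h0 ⊢
    rw [succ_nsmul]
    exact hn.padd_projCoords h h0

lemma projCoords_Y_ne_zero_of_odd {m : ℕ} (hm : Odd m) {P : (shortCurve A B).Point}
    (hP : m • P = 0) : (projCoords P).2.1 ≠ 0 := by
  rcases P with _ | ⟨x, y, h⟩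
  · exact one_ne_zero
  · intro hy
    obtain rfl : y = 0 := hy
    have hdbl : 2 • (.some x 0 h : (shortCurve A B).Point) = 0 := by
      rw [two_smul, Affine.Point.add_self_of_Y_eq (by rw [shortCurve_negY, neg_zero])]
    obtain ⟨k, rfl⟩ := hm
    rw [add_smul, mul_comm, mul_smul, hdbl, smul_zero, zero_add, one_smul] at hP
    exact Affine.Point.some_ne_zero h hP

lemma padd_self_Y_ne_zero {x y : F} (h2 : (2 : F) ≠ 0) (h : OnCurve A B (x, y, 1)) {m : ℕ}
    (hm : Odd m) (hm1 : 1 < m) (htor : ProjEq (pmul A B m (x, y, 1)) (0, 1, 0)) :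
    (padd A B (x, y, 1) (x, y, 1)).2.1 ≠ 0 := by
  have htor0 := htor.ne_zero (by simp)
  have hns := shortCurve_nonsingular h2 h (Y_ne_zero_of_pmul_ne_zero hm.pos htor0)
  set P : (shortCurve A B).Point := .some x y hns
  have hP : ProjEq (x, y, 1) (projCoords P) := .refl _
  have hmP : m • P = 0 :=
    eq_zero_of_projEq_infinity ((hP.pmul_projCoords htor0).symm.trans htor)
  have hdbl0 : padd A B (x, y, 1) (x, y, 1) ≠ 0 := by
    have h2m := pmul_ne_zero_of_le hm1 htor0
    rw [pmul_succ, pmul_succ, pmul_zero, padd_infinity_left, ← one_smul F (x, y, (1 : F)),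
      smul_smul, padd_smul] at h2m
    simpa using right_ne_zero_of_smul h2m
  refine ((hP.padd_projCoords hP hdbl0).isUnit_Y (isUnit_iff_ne_zero.2 ?_)).ne_zero
  exact projCoords_Y_ne_zero_of_odd hm (by rw [smul_add, hmP, add_zero])

end Field

section Lifting

variable {R S F : Type*} [CommRing R] [CommRing S] [Field F] {f : R →+* F} {g : R →+* S} {A B : R}

/-- For `f : R → F` and `g : R → S`, the triple `T` over `S` lifts to `P` if some triple over `R`
has image `T` over `S` and represents `P` over `F`. -/
def LiftsTo (f : R →+* F) (g : R →+* S) (T : Pt S) (P : (shortCurve (f A) (f B)).Point) : Prop :=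
  ∃ T₀ : Pt R, T₀.map g = T ∧ ProjEq (T₀.map f) (projCoords P)

namespace LiftsTo

variable {T T' : Pt S} {P P' : (shortCurve (f A) (f B)).Point}

lemma onCurve (hf : Function.Injective f) (h : LiftsTo f g T P) : OnCurve (g A) (g B) T := by
  obtain ⟨T₀, rfl, hT⟩ := h
  exact (OnCurve.of_map hf (hT.symm.onCurve (onCurve_projCoords P))).map g

protected lemma neg (h : LiftsTo f g T P) : LiftsTo f g T.neg (-P) := by
  obtain ⟨T₀, rfl, hT⟩ := h
  exact ⟨T₀.neg, Pt.map_neg _ _, by rw [Pt.map_neg]; exact hT.neg.trans (projCoords_neg P)⟩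

protected lemma padd (hf : Function.Injective f) (h : LiftsTo f g T P) (h' : LiftsTo f g T' P')
    (h0 : padd (g A) (g B) T T' ≠ 0) : LiftsTo f g (padd (g A) (g B) T T') (P + P') := by
  obtain ⟨T₀, rfl, hT⟩ := h
  obtain ⟨T₀', rfl, hT'⟩ := h'
  rw [← Pt.map_padd] at h0 ⊢
  have h0' := Pt.map_ne_zero hf (Pt.ne_zero_of_map h0)
  refine ⟨_, rfl, ?_⟩
  rw [Pt.map_padd] at h0' ⊢
  exact hT.padd_projCoords hT' h0'

protected lemma pmul (hf : Function.Injective f) (h : LiftsTo f g T P) {n : ℕ}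
    (h0 : pmul (g A) (g B) n T ≠ 0) : LiftsTo f g (pmul (g A) (g B) n T) (n • P) := by
  obtain ⟨T₀, rfl, hT⟩ := h
  rw [← Pt.map_pmul] at h0 ⊢
  have h0' := Pt.map_ne_zero hf (Pt.ne_zero_of_map h0)
  refine ⟨_, rfl, ?_⟩
  rw [Pt.map_pmul] at h0' ⊢
  exact hT.pmul_projCoords h0'

/- The triples are compared through `Y' • T = Y • T'`, which descends from `F` to `R`. -/
lemma projEq (hf : Function.Injective f) (h : LiftsTo f g T P) (h' : LiftsTo f g T' P)
    (hY : IsUnit T.2.1) (hY' : IsUnit T'.2.1) : ProjEq T T' := by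
  obtain ⟨T₀, rfl, hT⟩ := h
  obtain ⟨T₀', rfl, hT'⟩ := h'
  have hcross : T₀'.2.1 • T₀ = T₀.2.1 • T₀' := by
    refine Pt.map_injective hf ?_
    obtain ⟨u, hu⟩ := projEq_iff.1 (hT.trans hT'.symm)
    have huY : f T₀'.2.1 = u * f T₀.2.1 := congr(($hu).2.1)
    rw [Pt.map_smul, Pt.map_smul, hu, huY, smul_smul, mul_comm]
  have hcross' := congrArg (Pt.map g) hcross
  rw [Pt.map_smul, Pt.map_smul] at hcross'
  exact (projEq_smul hY' _).trans (hcross' ▸ (projEq_smul hY _).symm)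

lemma projEq_pmul_comm [Nontrivial S] (hf : Function.Injective f) (h : LiftsTo f g T P) {m n : ℕ}
    (hm : pmul (g A) (g B) m T ≠ 0) (hn : pmul (g A) (g B) n T ≠ 0)
    (hmn : IsUnit (pmul (g A) (g B) m (pmul (g A) (g B) n T)).2.1)
    (hnm : IsUnit (pmul (g A) (g B) n (pmul (g A) (g B) m T)).2.1) :
    ProjEq (pmul (g A) (g B) m (pmul (g A) (g B) n T))
      (pmul (g A) (g B) n (pmul (g A) (g B) m T)) := by
  have hlift := (h.pmul hf hm).pmul hf (ne_zero_of_isUnit_Y hnm)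
  rw [smul_comm] at hlift
  exact ((h.pmul hf hn).pmul hf (ne_zero_of_isUnit_Y hmn)).projEq hf hlift hmn hnm

/- With `D = T - T'`, both `m • T` and `m • D + m • T'` lift to `m • P`. -/
lemma projEq_pmul_of_sub [Nontrivial S] (hf : Function.Injective f) (h : LiftsTo f g T P)
    (h' : LiftsTo f g T' P') {m : ℕ} (h0 : padd (g A) (g B) T T'.neg ≠ 0)
    (hsub : ProjEq (pmul (g A) (g B) m (padd (g A) (g B) T T'.neg)) (0, 1, 0))
    (hY : IsUnit (pmul (g A) (g B) m T).2.1)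
    (hY' : IsUnit (pmul (g A) (g B) m T').2.1) :
    ProjEq (pmul (g A) (g B) m T) (pmul (g A) (g B) m T') := by
  set D := padd (g A) (g B) T T'.neg
  set mD := pmul (g A) (g B) m D
  set mT' := pmul (g A) (g B) m T'
  have hsum : ProjEq (padd (g A) (g B) mD mT') mT' := by
    refine (hsub.padd (g A) (g B) (.refl mT')).trans ?_
    rw [padd_infinity_left]
    exact (projEq_smul hY' _).symm
  have hsumY := hsum.isUnit_Y hY'
  have hmD : LiftsTo f g mD (m • (P + -P')) :=
    (h.padd hf h'.neg h0).pmul hf (hsub.ne_zero (by simp))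
  have hlift := hmD.padd hf (h'.pmul hf (ne_zero_of_isUnit_Y hY')) (ne_zero_of_isUnit_Y hsumY)
  rw [← smul_add, neg_add_cancel_right] at hlift
  exact ((h.pmul hf (ne_zero_of_isUnit_Y hY)).projEq hf hlift hY hsumY).trans hsum

end LiftsTo

end Lifting

section PowerSeries

open PowerSeries

variable {K : Type*} [CommRing K]

/-- The ring homomorphism `K⟦X⟧ → K[ε]` sending `X` to `ε`. -/
def evalEps (K : Type*) [CommRing K] : K⟦X⟧ →+* DualNumber K where
  toFun f := ιD (constantCoeff f) + ιD (coeff 1 f) * εD K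
  map_one' := by ext <;> simp [coeff_one]
  map_mul' f g := by ext <;> simp [coeff_one_mul, add_comm, mul_comm]
  map_zero' := by ext <;> simp
  map_add' f g := by ext <;> simp

lemma fst_evalEps (f : K⟦X⟧) :
    (evalEps K f).fst = constantCoeff f := by
  simp [evalEps]

lemma evalEps_surjective : Function.Surjective (evalEps K) := by
  intro d
  refine ⟨C d.fst + C d.snd * X, ?_⟩
  ext <;> simp [evalEps]

lemma exists_sq_eq_of_constantCoeff {R : Type*} [CommRing R] {f : R⟦X⟧} {y : R}
    (hy : IsUnit (2 * y)) (h : y ^ 2 = constantCoeff f) :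
    ∃ r : R⟦X⟧, r ^ 2 = f ∧ constantCoeff r = y := by
  have hmem {s : R⟦X⟧} : s ∈ Ideal.span {(X : R⟦X⟧)} ↔ constantCoeff s = 0 := by
    rw [Ideal.mem_span_singleton, X_dvd_iff]
  have hderiv : IsUnit (2 * C y : R⟦X⟧) := by
    rwa [isUnit_iff_constantCoeff, map_mul, map_ofNat, constantCoeff_C]
  obtain ⟨r, hr, hry⟩ := HenselianRing.is_henselian (I := Ideal.span {(X : R⟦X⟧)})
    (Polynomial.X ^ 2 - Polynomial.C f) (Polynomial.monic_X_pow_sub_C _ two_ne_zero) (C y)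
    (hmem.2 (by simp [h]))
    (by simpa [one_add_one_eq_two] using hderiv.map (Ideal.Quotient.mk (Ideal.span {X})))
  refine ⟨r, ?_, ?_⟩
  · simpa [sub_eq_zero] using hr
  · simpa [sub_eq_zero] using hmem.1 hry

lemma exists_liftsTo {K : Type*} [Field K] (h2 : (2 : K) ≠ 0) {A B : K⟦X⟧} {x y : DualNumber K}
    (h : OnCurve (evalEps K A) (evalEps K B) (x, y, 1)) (hy : y.fst ≠ 0) :
    ∃ P : (shortCurve (algebraMap K⟦X⟧ (FractionRing K⟦X⟧) A)
        (algebraMap K⟦X⟧ (FractionRing K⟦X⟧) B)).Point,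
      LiftsTo (algebraMap K⟦X⟧ (FractionRing K⟦X⟧)) (evalEps K) (x, y, 1) P := by
  have hy2 : 2 * y.fst ≠ 0 := mul_ne_zero h2 hy
  obtain ⟨x, rfl⟩ := evalEps_surjective x
  have hxy : y ^ 2 = evalEps K (x ^ 3 + A * x + B) := by rw [onCurve_affine_iff.1 h]; simp
  obtain ⟨r, hr, hry⟩ := exists_sq_eq_of_constantCoeff hy2.isUnit (f := x ^ 3 + A * x + B)
    (by rw [← fst_evalEps, ← hxy, TrivSqZeroExt.fst_pow])
  have hevalr : evalEps K r = y := by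
    have hsum : IsUnit (evalEps K r + y) := by
      rw [TrivSqZeroExt.isUnit_iff_isUnit_fst, TrivSqZeroExt.fst_add, fst_evalEps, hry, ← two_mul]
      exact hy2.isUnit
    refine sub_eq_zero.1 (hsum.mul_right_eq_zero.1 ?_)
    rw [← sq_sub_sq, ← map_pow, hr, ← hxy, sub_self]
  set f := algebraMap K⟦X⟧ (FractionRing K⟦X⟧)
  have hf : Function.Injective f := IsFractionRing.injective _ _
  have hr0 : f r ≠ 0 := by
    rw [map_ne_zero_iff f hf]
    rintro rfl
    exact hy (by simp [← hry])
  have h2f : (2 : FractionRing K⟦X⟧) ≠ 0 := by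
    rw [← map_ofNat (algebraMap K (FractionRing K⟦X⟧)) 2]
    exact (map_ne_zero _).2 h2
  have hE : OnCurve (f A) (f B) (f x, f r, 1) :=
    onCurve_affine_iff.2 (by simpa using congrArg f hr)
  exact ⟨.some _ _ (shortCurve_nonsingular h2f hE hr0), (x, r, 1), by simp [Pt.map, hevalr],
    by simpa [Pt.map, projCoords] using ProjEq.refl _⟩

end PowerSeries

section DualNumber

variable {K : Type*} [CommRing K]

/-- Reduction `K[ε] → K` modulo `ε`. -/
abbrev reduction (K : Type*) [CommRing K] : DualNumber K →+* K :=
  (TrivSqZeroExt.fstHom K K K : DualNumber K →+* K)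

lemma isUnit_Y_of_map_reduction {T : Pt (DualNumber K)}
    (h : ProjEq (T.map (reduction K)) (0, 1, 0)) : IsUnit T.2.1 :=
  TrivSqZeroExt.isUnit_iff_isUnit_fst.2 (h.isUnit_Y isUnit_one)

lemma padd_Oinf (A B : DualNumber K) (k l : K) :
    padd A B (Oinf k) (Oinf l) = Oinf (k + l) := by
  have hadd : ιD (k + l) = ιD k + ιD l := TrivSqZeroExt.inl_add K k l
  have hε : εD K ^ 2 = 0 := by rw [sq, DualNumber.eps_mul_eps]
  rw [Oinf, Oinf, Oinf, hadd]
  refine Prod.ext ?_ (Prod.ext ?_ ?_) <;> simp only [padd]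
  · ring
  · linear_combination 3 * A * ιD k ^ 2 * ιD l ^ 2 * εD K ^ 2 * hε
  · linear_combination 3 * ιD k * ιD l * (ιD k + ιD l) * εD K * hε

lemma Oinf_zero : Oinf (0 : K) = (0, 1, 0) := by simp [Oinf]

lemma pmul_Oinf (A B : DualNumber K) (n : ℕ) (k : K) : pmul A B n (Oinf k) = Oinf (n * k) := by
  induction n with
  | zero => rw [pmul_zero, Nat.cast_zero, zero_mul, Oinf_zero]
  | succ n ih => rw [pmul_succ, ih, padd_Oinf, Nat.cast_succ, add_mul, one_mul]

lemma projEq_Oinf_iff {k l : K} : ProjEq (Oinf k) (Oinf l) ↔ k = l := by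
  refine ⟨fun ⟨u, hu⟩ => ?_, fun h => h ▸ .refl _⟩
  obtain ⟨hX, hY, -⟩ : ιD l * εD K = u * (ιD k * εD K) ∧ 1 = (u : DualNumber K) * 1 ∧ _ := by
    simpa only [Oinf, Prod.mk.injEq] using hu
  rw [mul_one] at hY
  rw [← hY, one_mul] at hX
  simpa using (congrArg TrivSqZeroExt.snd hX).symm

/- In the chart `Y = 1` the equation `z = x³ + Axz² + Bz³` forces `z = 0`, since `x² = z² = 0`. -/
lemma exists_projEq_Oinf {A B : DualNumber K} {T : Pt (DualNumber K)} (hT : OnCurve A B T)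
    (hred : ProjEq (T.map (reduction K)) (0, 1, 0)) : ∃ k : K, ProjEq T (Oinf k) := by
  have hsq {d : DualNumber K} (hd : d.fst = 0) : d ^ 2 = 0 := by
    ext <;> simp [hd]
  obtain ⟨v, hv⟩ := isUnit_Y_of_map_reduction hred
  obtain ⟨u, hu⟩ := hred.symm
  have hX : T.1.fst = 0 := by simpa [Pt.map] using congr(($hu).1)
  have hZ : T.2.2.fst = 0 := by simpa [Pt.map] using congr(($hu).2.2)
  have hZ0 : T.2.2 = 0 := by
    refine ((v ^ 2).isUnit.mul_right_eq_zero).1 ?_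
    rw [Units.val_pow_eq_pow_val, hv, hT]
    linear_combination T.1 * hsq hX + (A * T.1 + B * T.2.2) * hsq hZ
  refine ⟨((v⁻¹ : (DualNumber K)ˣ) * T.1).snd, v⁻¹, Prod.ext ?_ (Prod.ext ?_ ?_)⟩
  · ext <;> simp [Oinf, hX]
  · simp [Oinf, ← hv]
  · simp [Oinf, hZ0]

variable {R F : Type*} [CommRing R] [Field F] {f : R →+* F} {g : R →+* DualNumber K} {A B : R}
  {T T' : Pt (DualNumber K)} {P P' : (shortCurve (f A) (f B)).Point}

lemma LiftsTo.exists_pmul_projEq_Oinf [Nontrivial K] (hf : Function.Injective f)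
    (h : LiftsTo f g T P) {m : ℕ}
    (htor : ProjEq ((pmul (g A) (g B) m T).map (reduction K)) (0, 1, 0)) :
    ∃ k : K, ProjEq (pmul (g A) (g B) m T) (Oinf k) :=
  exists_projEq_Oinf ((h.pmul hf (Pt.ne_zero_of_map (htor.ne_zero (by simp)))).onCurve hf) htor

/- The difference of two lifts lies in `Θ`, hence is killed by `p`. -/
lemma LiftsTo.projEq_pmul_of_map_reduction [Nontrivial K] (hf : Function.Injective f) (p : ℕ)
    [CharP K p] (h : LiftsTo f g T P) (h' : LiftsTo f g T' P')
    (hred : ProjEq (T.map (reduction K)) (T'.map (reduction K)))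
    (hdbl : IsUnit (padd (g A) (g B) T' T').2.1)
    (htor : ProjEq ((pmul (g A) (g B) p T').map (reduction K)) (0, 1, 0)) :
    ProjEq (pmul (g A) (g B) p T) (pmul (g A) (g B) p T') := by
  set D := padd (g A) (g B) T T'.neg with hD
  have hDred : ProjEq (D.map (reduction K)) (0, 1, 0) := by
    rw [hD, Pt.map_padd, Pt.map_neg]
    refine (hred.padd _ _ (.refl _)).trans ?_
    rw [padd_neg_self, ← Pt.map_padd]
    exact (projEq_smul (hdbl.map (reduction K)) _).symm
  have hD0 : D ≠ 0 := Pt.ne_zero_of_map (hDred.ne_zero (by simp))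
  obtain ⟨k, hk⟩ := exists_projEq_Oinf ((h.padd hf h'.neg hD0).onCurve hf) hDred
  have hpD : ProjEq (pmul (g A) (g B) p D) (0, 1, 0) := by
    simpa [pmul_Oinf, Oinf_zero] using hk.pmul (g A) (g B) p
  have hTtor : ProjEq ((pmul (g A) (g B) p T).map (reduction K)) (0, 1, 0) := by
    rw [Pt.map_pmul] at htor ⊢
    exact (hred.pmul _ _ p).trans htor
  exact h.projEq_pmul_of_sub hf h' hD0 hpD (isUnit_Y_of_map_reduction hTtor)
    (isUnit_Y_of_map_reduction htor)

lemma map_pmul_reduction (A B : DualNumber K) (m : ℕ) (x y : DualNumber K) :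
    (pmul A B m (x, y, 1)).map (reduction K) = pmul A.fst B.fst m (x.fst, y.fst, 1) :=
  Pt.map_pmul ..

lemma isUnit_padd_self_Y {K : Type*} [Field K] (h2 : (2 : K) ≠ 0) {A B x y : DualNumber K}
    (h : OnCurve A B (x, y, 1)) {m : ℕ} (hm : Odd m) (hm1 : 1 < m)
    (htor : ProjEq (pmul A.fst B.fst m (x.fst, y.fst, 1)) (0, 1, 0)) :
    IsUnit (padd A B (x, y, 1) (x, y, 1)).2.1 := by
  have hY : ((padd A B (x, y, 1) (x, y, 1)).map (reduction K)).2.1 ≠ 0 := by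
    rw [Pt.map_padd]
    exact padd_self_Y_ne_zero h2 (h.map (reduction K)) hm hm1 htor
  exact TrivSqZeroExt.isUnit_iff_isUnit_fst.2 hY.isUnit

theorem smart_dlp_reduction_general {K : Type*} [Field K] (p : ℕ) [Fact p.Prime] [CharP K p]
    (hp : p ≠ 2)
    (A B : DualNumber K) (n : ℕ) (xP yP xQ yQ : DualNumber K)
    (hP : OnCurve A B (xP, yP, 1)) (hQ : OnCurve A B (xQ, yQ, 1))
    (hPtor : ProjEq (pmul A.fst B.fst p (xP.fst, yP.fst, 1)) (0, 1, 0))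
    (hQtor : ProjEq (pmul A.fst B.fst p (xQ.fst, yQ.fst, 1)) (0, 1, 0))
    (hQP : ProjEq (pmul A.fst B.fst n (xP.fst, yP.fst, 1)) (xQ.fst, yQ.fst, 1)) :
    (∃ a : K, ProjEq (pmul A B p (xP, yP, 1)) (Oinf a)) ∧
    (∃ b : K, ProjEq (pmul A B p (xQ, yQ, 1)) (Oinf b)) ∧
    ProjEq (pmul A B p (pmul A B n (xP, yP, 1))) (pmul A B p (xQ, yQ, 1)) ∧
    ∀ a b : K, ProjEq (pmul A B p (xP, yP, 1)) (Oinf a) →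
      ProjEq (pmul A B p (xQ, yQ, 1)) (Oinf b) →
      (n : K) * a = b ∧ (a ≠ 0 → (n : K) = b * a⁻¹) := by
  have h2 : (2 : K) ≠ 0 := Ring.two_ne_zero (by rwa [ringChar.eq K p])
  have hodd : Odd p := (Fact.out : p.Prime).odd_of_ne_two hp
  have hinf : ((0, 1, 0) : Pt K) ≠ 0 := by simp
  obtain ⟨A, rfl⟩ := evalEps_surjective A
  obtain ⟨B, rfl⟩ := evalEps_surjective B
  obtain ⟨P, hPlift⟩ := exists_liftsTo h2 hP
    (Y_ne_zero_of_pmul_ne_zero hodd.pos (hPtor.ne_zero hinf))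
  obtain ⟨Q, hQlift⟩ := exists_liftsTo h2 hQ
    (Y_ne_zero_of_pmul_ne_zero hodd.pos (hQtor.ne_zero hinf))
  have hf := IsFractionRing.injective (PowerSeries K) (FractionRing (PowerSeries K))
  have hdbl := isUnit_padd_self_Y h2 hQ hodd (Fact.out : p.Prime).one_lt hQtor
  rw [← map_pmul_reduction] at hPtor hQtor hQP
  have hnP0 := Pt.ne_zero_of_map (hQP.ne_zero (by simp))
  have hpnP := (hPlift.pmul hf hnP0).projEq_pmul_of_map_reduction hf p hQlift hQP hdbl hQtor
  refine ⟨hPlift.exists_pmul_projEq_Oinf hf hPtor, hQlift.exists_pmul_projEq_Oinf hf hQtor,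
    hpnP, fun a b ha hb => ?_⟩
  have hnpP := ha.pmul (evalEps K A) (evalEps K B) n
  rw [pmul_Oinf] at hnpP
  have hcomm := hPlift.projEq_pmul_comm hf (ha.ne_zero (by simp [Oinf])) hnP0
    ((hpnP.trans hb).isUnit_Y isUnit_one) (hnpP.isUnit_Y isUnit_one)
  have hab := projEq_Oinf_iff.1 (hnpP.symm.trans (hcomm.symm.trans (hpnP.trans hb)))
  exact ⟨hab, fun ha0 => (eq_mul_inv_iff_mul_eq₀ ha0).2 hab⟩

end DualNumber

/-- Smart-style DLP reduction over the dual numbers: for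
`P, Q ∈ E(𝔽_p)[p]` with `Q = nP` and lifts `P̃, Q̃` to `Ẽ(𝔽_p[ε])`, the points
`p·P̃` and `p·Q̃` lie in `Θ`, `p(nP̃) - pQ̃ = O`, and writing `p·P̃ = O_a`,
`p·Q̃ = O_b` one has `n·a = b` in `𝔽_p`; if `a ≠ 0` then `n ≡ b·a⁻¹ mod p`. -/
theorem smart_dlp_reduction (p : ℕ) [Fact p.Prime] (hp : 3 < p)
    (A B A₁ B₁ : ZMod p) (hD : 4 * A ^ 3 + 27 * B ^ 2 ≠ 0)
    (n : ℕ) (xP yP xQ yQ : ZMod p)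
    (hP : yP ^ 2 = xP ^ 3 + A * xP + B) (hQ : yQ ^ 2 = xQ ^ 3 + A * xQ + B)
    (hPtor : ProjEq (pmul A B p ((xP, yP, 1) : Pt (ZMod p))) ((0, 1, 0) : Pt (ZMod p)))
    (hQtor : ProjEq (pmul A B p ((xQ, yQ, 1) : Pt (ZMod p))) ((0, 1, 0) : Pt (ZMod p)))
    (hQP : ProjEq (pmul A B n ((xP, yP, 1) : Pt (ZMod p))) ((xQ, yQ, 1) : Pt (ZMod p)))
    (xtP ytP xtQ ytQ : DualNumber (ZMod p))
    (hlP : OnCurve (ιD A + ιD A₁ * εD (ZMod p)) (ιD B + ιD B₁ * εD (ZMod p))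
      (xtP, ytP, 1))
    (hlQ : OnCurve (ιD A + ιD A₁ * εD (ZMod p)) (ιD B + ιD B₁ * εD (ZMod p))
      (xtQ, ytQ, 1))
    (hrP : TrivSqZeroExt.fst xtP = xP ∧ TrivSqZeroExt.fst ytP = yP)
    (hrQ : TrivSqZeroExt.fst xtQ = xQ ∧ TrivSqZeroExt.fst ytQ = yQ) :
    (∃ a : ZMod p, ProjEq
      (pmul (ιD A + ιD A₁ * εD (ZMod p)) (ιD B + ιD B₁ * εD (ZMod p)) p (xtP, ytP, 1))
      (Oinf a)) ∧
    (∃ b : ZMod p, ProjEq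
      (pmul (ιD A + ιD A₁ * εD (ZMod p)) (ιD B + ιD B₁ * εD (ZMod p)) p (xtQ, ytQ, 1))
      (Oinf b)) ∧
    ProjEq
      (pmul (ιD A + ιD A₁ * εD (ZMod p)) (ιD B + ιD B₁ * εD (ZMod p)) p
        (pmul (ιD A + ιD A₁ * εD (ZMod p)) (ιD B + ιD B₁ * εD (ZMod p)) n (xtP, ytP, 1)))
      (pmul (ιD A + ιD A₁ * εD (ZMod p)) (ιD B + ιD B₁ * εD (ZMod p)) p (xtQ, ytQ, 1)) ∧
    ∀ a b : ZMod p,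
      ProjEq (pmul (ιD A + ιD A₁ * εD (ZMod p)) (ιD B + ιD B₁ * εD (ZMod p)) p
        (xtP, ytP, 1)) (Oinf a) →
      ProjEq (pmul (ιD A + ιD A₁ * εD (ZMod p)) (ιD B + ιD B₁ * εD (ZMod p)) p
        (xtQ, ytQ, 1)) (Oinf b) →
      (n : ZMod p) * a = b ∧ (a ≠ 0 → (n : ZMod p) = b * a⁻¹) := by
  obtain ⟨⟨rfl, rfl⟩, rfl, rfl⟩ := And.intro hrP hrQ
  exact smart_dlp_reduction_general p (by lia) _ _ n xtP ytP xtQ ytQ hlP hlQ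
    (by simpa using hPtor) (by simpa using hQtor) (by simpa using hQP)
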